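/- arXiv:1909.10683 — 2 statements merged into one kernel-verified Lean document; each statement's English description precedes it below -/
import Mathlib

section
/- Let r ≥ 1, l ≥ 1 and N ≥ 1 be integers, and let v be a binary string that is the concatenation v = v₁v₂⋯v_N of N blocks each of length l. Then the average advantage of the blocks to the infinite alternating string A_r is at least the advantage of v to A_r: (1/N)·∑_{j=1}^{N} adv(v_j, A_r) ≥ adv(v, A_r). -/
/-- The length of a longest common subsequence of `x` and `y`. -/
noncomputable def LCS {α : Type*} (x y : List α) : ℕ :=
  sSup {n | ∃ u : List α, u.Sublist x ∧ u.Sublist y ∧ u.length = n}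

/-- The contiguous substring of the infinite alternating binary string `A_r = (0^r 1^r)^∞`
starting at (0-indexed) position `i` and having length `m`. -/
def altSeg (r i m : ℕ) : List Bool :=
  (List.range m).map (fun t => decide (((i + t) / r) % 2 = 1))

/-- Advantage of `a` over `b`: `(3·LCS(a,b) − |a| − |b|) / |a|`. -/
noncomputable def advR (a b : List Bool) : ℝ :=
  (3 * (LCS a b : ℝ) - a.length - b.length) / a.length

/-- Advantage of `a` to the infinite alternating string `A_r`: the supremum of the
advantage of `a` over all finite contiguous substrings of `A_r`. -/
noncomputable def advInf (a : List Bool) (r : ℕ) : ℝ :=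
  sSup {x : ℝ | ∃ i m : ℕ, x = advR a (altSeg r i m)}

/- A longest common subsequence of `v = v₁v₂⋯v_N` and a factor `b` of an infinite word splits along
the blocks of `v`, and `b` can be cut accordingly into consecutive factors `b₁, …, b_N`. Hence
`3·LCS(v, b) − |v| − |b| ≤ ∑ (3·LCS(v_j, b_j) − |v_j| − |b_j|)`: the advantage multiplied by the
length is subadditive under concatenation. Dividing by `|v| = N·l` turns this into the inequality
between averages. -/

section LCS

variable {α : Type*}

theorem bddAbove_length_commonSublist (x y : List α) :
    BddAbove {n | ∃ u : List α, u.Sublist x ∧ u.Sublist y ∧ u.length = n} :=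
  ⟨x.length, by rintro _ ⟨u, hx, -, rfl⟩; exact hx.length_le⟩

theorem length_le_LCS {x y u : List α} (hx : u.Sublist x) (hy : u.Sublist y) :
    u.length ≤ LCS x y :=
  le_csSup (bddAbove_length_commonSublist x y) ⟨u, hx, hy, rfl⟩

theorem exists_commonSublist_length_eq_LCS (x y : List α) :
    ∃ u : List α, u.Sublist x ∧ u.Sublist y ∧ u.length = LCS x y :=
  Nat.sSup_mem (s := {n | ∃ u : List α, u.Sublist x ∧ u.Sublist y ∧ u.length = n})
    ⟨0, [], List.nil_sublist x, List.nil_sublist y, rfl⟩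
    (bddAbove_length_commonSublist x y)

theorem LCS_le_length_left (x y : List α) : LCS x y ≤ x.length := by
  obtain ⟨u, hx, -, hu⟩ := exists_commonSublist_length_eq_LCS x y
  exact hu ▸ hx.length_le

theorem exists_LCS_append_le (x₁ x₂ y : List α) :
    ∃ k, LCS (x₁ ++ x₂) y ≤ LCS x₁ (y.take k) + LCS x₂ (y.drop k) := by
  obtain ⟨u, hx, hy, hu⟩ := exists_commonSublist_length_eq_LCS (x₁ ++ x₂) y
  obtain ⟨u₁, u₂, rfl, hx₁, hx₂⟩ := List.sublist_append_iff.1 hx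
  obtain ⟨y₁, y₂, rfl, hy₁, hy₂⟩ := List.append_sublist_iff.1 hy
  refine ⟨y₁.length, ?_⟩
  rw [List.take_left, List.drop_left, ← hu, List.length_append]
  exact add_le_add (length_le_LCS hx₁ hy₁) (length_le_LCS hx₂ hy₂)

end LCS

section Factor

variable {α : Type*}

/-- The factor (contiguous substring) of the infinite word `w` that starts at the 0-indexed
position `i` and has length `m`. -/
def factor (w : ℕ → α) (i m : ℕ) : List α :=
  (List.range m).map fun t => w (i + t)

theorem take_factor (w : ℕ → α) (i m k : ℕ) :
    (factor w i m).take k = factor w i (min k m) := by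
  simp [factor, ← List.map_take, List.take_range]

theorem drop_factor (w : ℕ → α) (i m k : ℕ) :
    (factor w i m).drop k = factor w (i + k) (m - k) := by
  refine List.ext_getElem ?_ fun n _ _ => ?_ <;> simp [factor, Nat.add_assoc]

end Factor

section Excess

variable {α : Type*}

/-- The numerator `3·LCS(a, b) − |a| − |b|` of the advantage of `a` over `b`. -/
noncomputable def excess (a b : List α) : ℝ :=
  3 * (LCS a b : ℝ) - a.length - b.length

theorem excess_le_two_mul_length (a b : List α) : excess a b ≤ 2 * a.length := by
  have hLCS : (LCS a b : ℝ) ≤ a.length := mod_cast LCS_le_length_left a b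
  unfold excess
  linarith

theorem excess_nil_left (b : List α) : excess [] b = -b.length := by
  have hLCS : LCS [] b = 0 := Nat.le_zero.1 (LCS_le_length_left [] b)
  simp [excess, hLCS]

theorem exists_excess_append_le (a₁ a₂ b : List α) :
    ∃ k, excess (a₁ ++ a₂) b ≤ excess a₁ (b.take k) + excess a₂ (b.drop k) := by
  obtain ⟨k, hk⟩ := exists_LCS_append_le a₁ a₂ b
  have hLCS : (LCS (a₁ ++ a₂) b : ℝ) ≤ LCS a₁ (b.take k) + LCS a₂ (b.drop k) := mod_cast hk
  have hb : (b.length : ℝ) = (b.take k).length + (b.drop k).length := by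
    rw [← Nat.cast_add, ← List.length_append, List.take_append_drop]
  refine ⟨k, ?_⟩
  simp only [excess, List.length_append, Nat.cast_add]
  linarith

/-- The supremum of `excess a b` over all factors `b` of the infinite word `w`, indexed by their
position and length. -/
noncomputable def supExcess (a : List α) (w : ℕ → α) : ℝ :=
  ⨆ p : ℕ × ℕ, excess a (factor w p.1 p.2)

theorem excess_factor_le_supExcess (a : List α) (w : ℕ → α) (i m : ℕ) :
    excess a (factor w i m) ≤ supExcess a w :=
  le_ciSup (f := fun p : ℕ × ℕ => excess a (factor w p.1 p.2))
    ⟨2 * a.length, by rintro _ ⟨p, rfl⟩; exact excess_le_two_mul_length a _⟩ (i, m)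

theorem supExcess_nil (w : ℕ → α) : supExcess [] w = 0 := by
  refine le_antisymm (ciSup_le fun p => ?_) ?_
  · simp [excess_nil_left]
  · simpa [excess_nil_left, factor] using excess_factor_le_supExcess [] w 0 0

theorem supExcess_append_le (a₁ a₂ : List α) (w : ℕ → α) :
    supExcess (a₁ ++ a₂) w ≤ supExcess a₁ w + supExcess a₂ w := by
  refine ciSup_le fun ⟨i, m⟩ => ?_
  obtain ⟨k, hk⟩ := exists_excess_append_le a₁ a₂ (factor w i m)
  rw [take_factor, drop_factor] at hk
  exact hk.trans (add_le_add (excess_factor_le_supExcess ..) (excess_factor_le_supExcess ..))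

theorem supExcess_flatten_le (vs : List (List α)) (w : ℕ → α) :
    supExcess vs.flatten w ≤ (vs.map fun v => supExcess v w).sum := by
  induction vs with
  | nil => exact (supExcess_nil w).le
  | cons v vs ih => exact (supExcess_append_le v vs.flatten w).trans (by simpa using ih)

end Excess

section Advantage

variable {α : Type*}

/-- The advantage of `a` to an arbitrary infinite word `w`; for `w = A_r` this is `advInf a r`. -/
noncomputable def advWord (a : List α) (w : ℕ → α) : ℝ :=
  ⨆ p : ℕ × ℕ, excess a (factor w p.1 p.2) / a.length

theorem length_mul_advWord (a : List α) (w : ℕ → α) :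
    a.length * advWord a w = supExcess a w := by
  rcases eq_or_ne a [] with rfl | ha
  · simp [supExcess_nil]
  · have hlen : (a.length : ℝ) ≠ 0 := by simpa using ha
    simp only [advWord, supExcess, Real.mul_iSup_of_nonneg a.length.cast_nonneg,
      mul_div_cancel₀ _ hlen]

/-- The infinite alternating word `A_r = (0^r 1^r)^∞`. -/
def altWord (r n : ℕ) : Bool :=
  decide (n / r % 2 = 1)

theorem advInf_eq_advWord_altWord (a : List Bool) (r : ℕ) :
    advInf a r = advWord a (altWord r) := by
  have hseg (i m : ℕ) : advR a (altSeg r i m) = excess a (factor (altWord r) i m) / a.length := rfl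
  simp only [advInf, hseg, advWord, iSup, Set.range, Prod.exists, eq_comm]

theorem stmt10_general {N : ℕ} (w : ℕ → α) (blocks : Fin N → List α) :
    (List.ofFn blocks).flatten.length * advWord (List.ofFn blocks).flatten w ≤
      ∑ j, (blocks j).length * advWord (blocks j) w := by
  simpa only [length_mul_advWord, List.map_ofFn, List.sum_ofFn, Function.comp_apply] using
    supExcess_flatten_le (List.ofFn blocks) w

end Advantage

theorem stmt10 (r l N : ℕ) (hr : 1 ≤ r) (hl : 1 ≤ l) (hN : 1 ≤ N)
    (blocks : Fin N → List Bool) (hlen : ∀ j, (blocks j).length = l) :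
    advInf ((List.ofFn blocks).flatten) r ≤ (1 / (N : ℝ)) * ∑ j, advInf (blocks j) r := by
  rw [one_div_mul_eq_div, le_div_iff₀' (by positivity), ← mul_le_mul_iff_right₀ (Nat.cast_pos.2 hl)]
  simpa [hlen, advInf_eq_advWord_altWord, List.sum_ofFn, Function.comp_def, ← Finset.mul_sum,
    mul_assoc, mul_left_comm] using stmt10_general (altWord r) blocks
end

section
/- Let q ≥ 2 and 1 ≤ z ≤ q−1 be integers, let ε ∈ (0,1] be a real, let n ≥ 1 and r ≥ 1 be integers, and let v be a nonempty string over Fin q. Suppose there exists a common subsequence u of v and A^q_{r,n} such that (|v| − |u|) + 2z·(n − |u|) ≤ (1 − ε)·((2q−1)z − z²)/q · n. Then adv^{q,z}(v, A^q_{r,n}) ≥ ε/q, i.e., (2z+1)·LCS(v, A^q_{r,n}) − |v| − ((z + z²)/q)·n ≥ (ε/q)·|v|. -/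
/-- The prefix of length `l` of the infinite `q`-ary string `(1^r 2^r ⋯ q^r)^∞`
(realized over `Fin q`). -/
def bukhMaQ (q r l : ℕ) : List (Fin q) :=
  if h : 0 < q then (List.range l).map (fun t => ⟨(t / r) % q, Nat.mod_lt _ h⟩) else []

/-! Write `C = ((2q - 1)z - z²)/q`. Deleting letters from `v` at cost `1` each and from `w` at cost
`2z` each, down to a common subsequence of length `U`, costs `(|v| - U) + 2z(|w| - U)`, and
`C|w|` minus this cost is exactly the numerator of the advantage with `LCS` replaced by `U`. A cost
of at most `(1 - ε)C|w|` therefore leaves a numerator of at least `εC|w|`. Such a cost also prevents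
`v` from being much longer than `w`: since `C ≥ 1`, it forces `|v| ≤ 2C|w| ≤ qC|w|`. -/

theorem length_bukhMaQ {q : ℕ} (hq : 0 < q) (r l : ℕ) : (bukhMaQ q r l).length = l := by
  simp [bukhMaQ, hq]

section

variable {α : Type*} {u v w : List α} {q z : ℝ}

theorem length_le_LCS_s15 (huv : u.Sublist v) (huw : u.Sublist w) : u.length ≤ LCS v w := by
  refine le_csSup ⟨v.length, ?_⟩ ⟨u, huv, huw, rfl⟩
  rintro _ ⟨t, htv, -, rfl⟩
  exact htv.length_le

/-- The weighted cost of reducing `v` and `w` to a common subsequence `u`, a deletion costing `1`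
in `v` and `2z` in `w`. It is real-valued, so that the differences of lengths are not truncated. -/
def deletionCost (z : ℝ) (u v w : List α) : ℝ :=
  ((v.length : ℝ) - u.length) + 2 * z * ((w.length : ℝ) - u.length)

/-- The deletion cost per letter of `w` at which the advantage, computed with the length of the
given common subsequence in place of `LCS`, vanishes. -/
noncomputable def criticalRate (q z : ℝ) : ℝ :=
  ((2 * q - 1) * z - z ^ 2) / q

theorem criticalRate_mul_sub_deletionCost (hq : q ≠ 0) (z : ℝ) (u v w : List α) :
    criticalRate q z * w.length - deletionCost z u v w =
      (2 * z + 1) * u.length - v.length - (z + z ^ 2) / q * w.length := by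
  unfold criticalRate deletionCost
  field_simp
  ring

theorem one_le_criticalRate (hq : 2 ≤ q) (hz1 : 1 ≤ z) (hz2 : z ≤ 2 * q - 2) :
    1 ≤ criticalRate q z := by
  have hprod : 0 ≤ (z - 1) * (2 * q - 2 - z) :=
    mul_nonneg (sub_nonneg.2 hz1) (sub_nonneg.2 hz2)
  rw [criticalRate, le_div_iff₀ (by linarith)]
  linarith

theorem length_le_length_add_deletionCost (hz : 0 ≤ z) (huw : u.Sublist w) (v : List α) :
    (v.length : ℝ) ≤ w.length + deletionCost z u v w := by
  have hlen : (u.length : ℝ) ≤ w.length := mod_cast huw.length_le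
  have hdel : 0 ≤ z * ((w.length : ℝ) - u.length) := mul_nonneg hz (sub_nonneg.2 hlen)
  unfold deletionCost
  linarith

theorem length_le_of_deletionCost_le (hq : 2 ≤ q) (hz1 : 1 ≤ z) (hz2 : z ≤ 2 * q - 2)
    (huw : u.Sublist w) (hcost : deletionCost z u v w ≤ criticalRate q z * w.length) :
    (v.length : ℝ) ≤ q * (criticalRate q z * w.length) := by
  have hrate : 1 ≤ criticalRate q z := one_le_criticalRate hq hz1 hz2
  calc (v.length : ℝ) ≤ w.length + deletionCost z u v w :=
        length_le_length_add_deletionCost (zero_le_one.trans hz1) huw v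
    _ ≤ criticalRate q z * w.length + criticalRate q z * w.length :=
        add_le_add (le_mul_of_one_le_left (Nat.cast_nonneg _) hrate) hcost
    _ = 2 * (criticalRate q z * w.length) := (two_mul _).symm
    _ ≤ q * (criticalRate q z * w.length) := by gcongr

theorem stmt15_general {ε : ℝ} (hq : 2 ≤ q) (hz1 : 1 ≤ z) (hz2 : z ≤ 2 * q - 2) (hε : 0 ≤ ε)
    (huv : u.Sublist v) (huw : u.Sublist w)
    (hcost : ((v.length : ℝ) - u.length) + 2 * z * ((w.length : ℝ) - u.length) ≤
      (1 - ε) * ((2 * q - 1) * z - z ^ 2) / q * w.length) :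
    (ε / q) * v.length ≤
      (2 * z + 1) * (LCS v w : ℝ) - v.length - ((z + z ^ 2) / q) * w.length := by
  have hq0 : 0 < q := two_pos.trans_le hq
  have hbudget : deletionCost z u v w ≤ (1 - ε) * (criticalRate q z * w.length) :=
    hcost.trans_eq (by rw [criticalRate]; ring)
  have hsurplus : 0 ≤ ε * (criticalRate q z * w.length) :=
    mul_nonneg hε (mul_nonneg (zero_le_one.trans (one_le_criticalRate hq hz1 hz2))
      (Nat.cast_nonneg _))
  have hlen : (v.length : ℝ) ≤ q * (criticalRate q z * w.length) :=
    length_le_of_deletionCost_le hq hz1 hz2 huw (by linarith)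
  calc (ε / q) * v.length ≤ (ε / q) * (q * (criticalRate q z * w.length)) := by gcongr
    _ = ε * (criticalRate q z * w.length) := by field_simp
    _ ≤ criticalRate q z * w.length - deletionCost z u v w := by linarith
    _ = (2 * z + 1) * u.length - v.length - (z + z ^ 2) / q * w.length :=
        criticalRate_mul_sub_deletionCost hq0.ne' z u v w
    _ ≤ (2 * z + 1) * (LCS v w : ℝ) - v.length - ((z + z ^ 2) / q) * w.length := by
        gcongr
        exact length_le_LCS_s15 huv huw

end

theorem stmt15 (q z : ℕ) (hq : 2 ≤ q) (hz1 : 1 ≤ z) (hz2 : z ≤ q - 1)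
    (ε : ℝ) (hε : ε ∈ Set.Ioc (0 : ℝ) 1) (n r : ℕ) (hn : 1 ≤ n) (hr : 1 ≤ r)
    (v : List (Fin q)) (hv : v ≠ [])
    (h : ∃ u : List (Fin q), u.Sublist v ∧ u.Sublist (bukhMaQ q r n) ∧
      ((v.length : ℝ) - u.length) + 2 * z * ((n : ℝ) - u.length) ≤
        (1 - ε) * ((2 * (q : ℝ) - 1) * z - (z : ℝ) ^ 2) / q * n) :
    (ε / q) * v.length ≤
      (2 * (z : ℝ) + 1) * (LCS v (bukhMaQ q r n) : ℝ) - v.length -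
        (((z : ℝ) + (z : ℝ) ^ 2) / q) * n := by
  obtain ⟨u, huv, huw, hcost⟩ := h
  have hlen : (bukhMaQ q r n).length = n := length_bukhMaQ (by omega) r n
  have hz2' : (z : ℝ) + 2 ≤ 2 * q := mod_cast (by omega : z + 2 ≤ 2 * q)
  simpa only [hlen] using stmt15_general (mod_cast hq) (mod_cast hz1) (le_sub_iff_add_le.2 hz2')
    hε.1.le huv huw (by rwa [hlen])
end
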